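/- arXiv:1905.10818 — 3 statements merged into one kernel-verified Lean document; each statement's English description precedes it below -/
import Mathlib

section
/- In a queue trace q : ℕ → List α, if an element occupies index i in q n, and for times n ≤ n' the number of dequeue steps occurring at times in the interval [n, n') equals d with d ≤ i, then that same element occupies index i − d in q n'. -/
/-- A queue trace: at each time step, exactly one of enqueue (at the tail),
dequeue (from the head), or idle happens. -/
def IsQueueTrace {α : Type*} (q : ℕ → List α) : Prop :=
  ∀ n, (∃ x, q (n + 1) = q n ++ [x]) ∨
    (q n ≠ [] ∧ q (n + 1) = (q n).tail) ∨
    q (n + 1) = q n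

/-- A dequeue step occurs at time `n`. -/
def DequeueAt {α : Type*} (q : ℕ → List α) (n : ℕ) : Prop :=
  q n ≠ [] ∧ q (n + 1) = (q n).tail

/-! Arrivals extend the queue at its tail, so between two times the queue only loses a prefix, one
element per departure, and gains a suffix. If `d` departures occur, the old queue without its first
`d` elements is a prefix of the new one, and ranks inside a prefix are preserved. -/

section DequeueCount

variable {α : Type*} {q : ℕ → List α} {n k : ℕ}

/-- The set of times in `[n, k)` at which the head of the queue leaves. -/
def dequeueTimes (q : ℕ → List α) (n k : ℕ) : Set ℕ :=
  Set.Ico n k ∩ {m | DequeueAt q m}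

/-- The number of departures from the queue during `[n, k)`. -/
noncomputable def dequeueCount (q : ℕ → List α) (n k : ℕ) : ℕ :=
  (dequeueTimes q n k).ncard

theorem dequeueCount_self (q : ℕ → List α) (n : ℕ) : dequeueCount q n n = 0 := by
  simp [dequeueCount, dequeueTimes]

theorem DequeueAt.dequeueCount_succ (hk : DequeueAt q k) (hnk : n ≤ k) :
    dequeueCount q n (k + 1) = dequeueCount q n k + 1 := by
  have hinsert : dequeueTimes q n (k + 1) = insert k (dequeueTimes q n k) := by
    rw [dequeueTimes, ← Set.insert_Ico_right_eq_Ico_add_one hnk]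
    exact Set.insert_inter_of_mem hk
  have hnotMem : k ∉ dequeueTimes q n k := fun h => lt_irrefl k h.1.2
  have hfinite : (dequeueTimes q n k).Finite := (Set.finite_Ico n k).inter_of_left _
  rw [dequeueCount, hinsert, Set.ncard_insert_of_notMem hnotMem hfinite, dequeueCount]

theorem dequeueCount_succ_of_not_dequeueAt (hk : ¬DequeueAt q k) (hnk : n ≤ k) :
    dequeueCount q n (k + 1) = dequeueCount q n k := by
  have htimes : dequeueTimes q n (k + 1) = dequeueTimes q n k := by
    rw [dequeueTimes, ← Set.insert_Ico_right_eq_Ico_add_one hnk]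
    exact Set.insert_inter_of_notMem hk
  rw [dequeueCount, htimes, dequeueCount]

end DequeueCount

namespace IsQueueTrace

variable {α : Type*} {q : ℕ → List α} {n k : ℕ}

theorem prefix_succ_of_not_dequeueAt (hq : IsQueueTrace q) (hk : ¬DequeueAt q k) :
    q k <+: q (k + 1) := by
  rcases hq k with ⟨x, henqueue⟩ | hdequeue | hidle
  · exact ⟨[x], henqueue.symm⟩
  · exact absurd hdequeue hk
  · exact hidle ▸ List.prefix_rfl

theorem drop_dequeueCount_prefix (hq : IsQueueTrace q) (hnk : n ≤ k) :
    (q n).drop (dequeueCount q n k) <+: q k := by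
  induction k, hnk using Nat.le_induction with
  | base => rw [dequeueCount_self, List.drop_zero]
  | succ k hnk ih =>
    by_cases hk : DequeueAt q k
    · rw [hk.dequeueCount_succ hnk, ← List.drop_drop, hk.2, ← List.drop_one]
      exact ih.drop 1
    · rw [dequeueCount_succ_of_not_dequeueAt hk hnk]
      exact ih.trans (hq.prefix_succ_of_not_dequeueAt hk)

end IsQueueTrace

/-- If an element occupies index `i` at time `n`, and `d ≤ i` dequeue steps occur
at times in `[n, n')`, then the same element occupies index `i - d` at time `n'`. -/
theorem queue_index_shift {α : Type*} (q : ℕ → List α) (hq : IsQueueTrace q)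
    (n n' i d : ℕ) (hnn' : n ≤ n') (hi : i < (q n).length)
    (hd : Nat.card {m : ℕ | m ∈ Set.Ico n n' ∧ DequeueAt q m} = d)
    (hdi : d ≤ i) :
    (q n')[i - d]? = (q n)[i]? := by
  have hprefix : (q n).drop d <+: q n' := by
    have hcount : dequeueCount q n n' = d := hd
    exact hcount ▸ hq.drop_dequeueCount_prefix hnn'
  have hlt : i - d < ((q n).drop d).length := by
    rw [List.length_drop]
    omega
  calc
    (q n')[i - d]? = ((q n).drop d)[i - d]? := by
      rw [List.prefix_iff_getElem?.mp hprefix _ hlt, List.getElem?_eq_getElem hlt]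
    _ = (q n)[i]? := by rw [List.getElem?_drop, Nat.add_sub_cancel' hdi]
end

section
/- In a queue trace q : ℕ → List α in which dequeue steps occur infinitely often (for every time n there exists m ≥ n at which a dequeue step occurs), every element that is ever in the queue eventually reaches the head: for every time n and every index i < (q n).length, there exists a time m ≥ n such that q m is nonempty, the head of q m is the element that occupied index i of q n, and a dequeue step occurs at time m. -/
/-!
If `c` dequeue steps occur between times `n` and `m`, then `(q n).drop c` is a prefix of `q m`:
a dequeue removes one more element, and every other step only extends the queue at its tail.
Hence the element at index `i` of `q n` leaves the queue at the `(i + 1)`-st dequeue step from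
time `n` on.
-/

theorem IsQueueTrace.isPrefix_succ {α : Type*} {q : ℕ → List α} (hq : IsQueueTrace q) {n : ℕ}
    (hn : ¬ DequeueAt q n) : q n <+: q (n + 1) := by
  rcases hq n with ⟨x, henqueue⟩ | hdequeue | hidle
  · exact henqueue ▸ List.prefix_append (q n) [x]
  · exact absurd hdequeue hn
  · exact hidle ▸ List.prefix_rfl

theorem exists_ge_and_count_eq_add {p : ℕ → Prop} [DecidablePred p]
    (hp : ∀ n, ∃ m, n ≤ m ∧ p m) (n k : ℕ) :
    ∃ m, n ≤ m ∧ p m ∧ Nat.count p m = Nat.count p n + k := by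
  have hinf : {m | p m}.Infinite :=
    Nat.frequently_atTop_iff_infinite.mp (Filter.frequently_atTop.mpr hp)
  exact ⟨Nat.nth p (Nat.count p n + k),
    (Nat.count_le_iff_le_nth hinf).mp (Nat.le_add_right _ _),
    Nat.nth_mem_of_infinite hinf _, Nat.count_nth_of_infinite hinf _⟩

section ExtendingTrace

variable {α : Type*} {q : ℕ → List α} (hq : ∀ n, ¬ DequeueAt q n → q n <+: q (n + 1))
include hq

theorem drop_count_dequeueAt_isPrefix [DecidablePred (DequeueAt q)] {n m : ℕ} (hnm : n ≤ m) :
    (q n).drop (Nat.count (DequeueAt q) m - Nat.count (DequeueAt q) n) <+: q m := by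
  induction m, hnm using Nat.le_induction with
  | base => rw [Nat.sub_self, List.drop_zero]
  | succ m hnm ih =>
    by_cases hm : DequeueAt q m
    · rw [Nat.count_succ_eq_succ_count hm, Nat.sub_add_comm (Nat.count_monotone _ hnm),
        ← List.drop_drop, hm.2, ← List.drop_one]
      exact ih.drop 1
    · rw [Nat.count_succ_eq_count hm]
      exact ih.trans (hq m hm)

theorem head?_eq_getElem?_of_count_dequeueAt [DecidablePred (DequeueAt q)] {n m i : ℕ}
    (hnm : n ≤ m) (hi : i < (q n).length)
    (hcount : Nat.count (DequeueAt q) m = Nat.count (DequeueAt q) n + i) :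
    (q m).head? = (q n)[i]? := by
  have hprefix : (q n).drop i <+: q m := by
    simpa only [hcount, Nat.add_sub_cancel_left] using drop_count_dequeueAt_isPrefix hq hnm
  have hne : (q n).drop i ≠ [] := mt List.drop_eq_nil_iff.mp hi.not_ge
  obtain ⟨later, hlater⟩ := hprefix
  rw [← hlater, List.head?_append_of_ne_nil _ hne, List.head?_drop]

theorem queue_eventually_head_general (hinf : ∀ n, ∃ m, n ≤ m ∧ DequeueAt q m)
    (n i : ℕ) (hi : i < (q n).length) :
    ∃ m, n ≤ m ∧ q m ≠ [] ∧ (q m).head? = (q n)[i]? ∧ DequeueAt q m := by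
  classical
  obtain ⟨m, hnm, hm, hcount⟩ := exists_ge_and_count_eq_add hinf n i
  exact ⟨m, hnm, hm.1, head?_eq_getElem?_of_count_dequeueAt hq hnm hi hcount, hm⟩

end ExtendingTrace

/-- If dequeue steps occur infinitely often, then every element that is ever in
the queue eventually reaches the head and is dequeued. -/
theorem queue_eventually_head {α : Type*} (q : ℕ → List α) (hq : IsQueueTrace q)
    (hinf : ∀ n, ∃ m, n ≤ m ∧ DequeueAt q m)
    (n i : ℕ) (hi : i < (q n).length) :
    ∃ m, n ≤ m ∧ (q m) ≠ [] ∧ (q m).head? = (q n)[i]? ∧ DequeueAt q m :=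
  queue_eventually_head_general (fun _ => hq.isPrefix_succ) hinf n i hi
end

section
/- In a queue trace q : ℕ → List α starting from the empty queue (q 0 = []) in which all enqueued elements are pairwise distinct (no element is enqueued at two different times, and for two enqueue steps at distinct times the enqueued elements differ), if x is enqueued at time n₁, y is enqueued at time n₂ with n₁ < n₂, and y is dequeued at some time m₂ > n₂, then x is dequeued at some time m₁ with n₁ < m₁ < m₂. (This is the trace-level statement of the paper's FIFO guarantee for the GCR queue: threads are dequeued in exactly the order in which they were enqueued.) -/
/-- The element `x` is enqueued at time `n`. -/
def EnqueueAt {α : Type*} (q : ℕ → List α) (n : ℕ) (x : α) : Prop :=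
  q (n + 1) = q n ++ [x]

/-!
While `x` is in the queue and `y` is not, the whole queue is an initial segment containing `x` but
not `y`. The existence of such an initial segment survives every step other than a dequeue of `x`,
and it prevents `y` from being at the head. So `x` is dequeued before `y` can reach the head.
-/

section

variable {α : Type*}

/-- `x` is ahead of `y` in the queue contents `l`: the first occurrence of `x` precedes every
occurrence of `y`. An initial segment is used as the witness so that `y` need not occur in `l`. -/
def AheadOf (x y : α) (l : List α) : Prop :=
  ∃ p, p <+: l ∧ x ∈ p ∧ y ∉ p

namespace AheadOf

variable {x y : α} {l : List α}

theorem of_mem_of_notMem (hx : x ∈ l) (hy : y ∉ l) : AheadOf x y l :=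
  ⟨l, List.prefix_rfl, hx, hy⟩

theorem append_right (h : AheadOf x y l) (l' : List α) : AheadOf x y (l ++ l') := by
  obtain ⟨p, hpl, hx, hy⟩ := h
  exact ⟨p, hpl.trans (List.prefix_append l l'), hx, hy⟩

theorem tail (h : AheadOf x y l) (hhead : l.head? ≠ some x) : AheadOf x y l.tail := by
  obtain ⟨_ | ⟨z, p⟩, ⟨s, rfl⟩, hx, hy⟩ := h
  · exact absurd hx List.not_mem_nil
  · have hxz : x ≠ z := fun hxz ↦ hhead (congrArg some hxz.symm)
    exact ⟨p, List.prefix_append p s, List.mem_of_ne_of_mem hxz hx,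
      List.not_mem_of_not_mem_cons hy⟩

theorem head?_ne (h : AheadOf x y l) : l.head? ≠ some y := by
  obtain ⟨_ | ⟨z, p⟩, ⟨s, rfl⟩, hx, hy⟩ := h
  · exact absurd hx List.not_mem_nil
  · exact fun hzy ↦ List.ne_of_not_mem_cons hy (Option.some.inj hzy).symm

end AheadOf

theorem EnqueueAt.mem_succ {q : ℕ → List α} {n : ℕ} {x : α} (h : EnqueueAt q n x) :
    x ∈ q (n + 1) := by
  rw [EnqueueAt] at h
  simp [h]

namespace IsQueueTrace

variable {q : ℕ → List α} {x y : α} {n m : ℕ}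

theorem notMem_of_forall_not_enqueueAt (hq : IsQueueTrace q) (h0 : y ∉ q 0)
    (hy : ∀ k < n, ¬EnqueueAt q k y) : y ∉ q n := by
  induction n with
  | zero => exact h0
  | succ n ih =>
    have hyn : y ∉ q n := ih fun k hk ↦ hy k (hk.trans n.lt_succ_self)
    rcases hq n with ⟨z, enqueue⟩ | ⟨-, dequeue⟩ | idle
    · have hyz : y ≠ z := by
        rintro rfl
        exact hy n n.lt_succ_self enqueue
      simp [enqueue, hyn, hyz]
    · rw [dequeue]
      exact fun h ↦ hyn (List.mem_of_mem_tail h)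
    · rwa [idle]

theorem aheadOf_succ (hq : IsQueueTrace q) (h : AheadOf x y (q n))
    (hx : ¬(DequeueAt q n ∧ (q n).head? = some x)) : AheadOf x y (q (n + 1)) := by
  rcases hq n with ⟨z, enqueue⟩ | dequeue | idle
  · rw [enqueue]
    exact h.append_right [z]
  · rw [dequeue.2]
    exact h.tail fun hhead ↦ hx ⟨dequeue, hhead⟩
  · rwa [idle]

theorem exists_dequeueAt_of_aheadOf (hq : IsQueueTrace q) (hnm : n ≤ m)
    (hn : AheadOf x y (q n)) (hm : ¬AheadOf x y (q m)) :
    ∃ k, n ≤ k ∧ k < m ∧ DequeueAt q k ∧ (q k).head? = some x := by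
  induction m, hnm using Nat.le_induction with
  | base => exact absurd hn hm
  | succ m hnm ih =>
    by_cases hahead : AheadOf x y (q m)
    · have hdeq : DequeueAt q m ∧ (q m).head? = some x :=
        by_contra fun hx ↦ hm (hq.aheadOf_succ hahead hx)
      exact ⟨m, hnm, m.lt_succ_self, hdeq⟩
    · obtain ⟨k, hnk, hkm, hdeq⟩ := ih hahead
      exact ⟨k, hnk, hkm.trans m.lt_succ_self, hdeq⟩

end IsQueueTrace

theorem queue_fifo_enqueue_dequeue_general {q : ℕ → List α} (hq : IsQueueTrace q) {x y : α}
    {n m : ℕ} (hnm : n ≤ m) (hx : x ∈ q n) (hy : y ∉ q n) (hhead : (q m).head? = some y) :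
    ∃ k, n ≤ k ∧ k < m ∧ DequeueAt q k ∧ (q k).head? = some x :=
  hq.exists_dequeueAt_of_aheadOf hnm (.of_mem_of_notMem hx hy) fun h ↦ h.head?_ne hhead

end

/-- FIFO dequeue order: in a trace from the empty queue with pairwise distinct
enqueued elements, if `x` is enqueued before `y` and `y` is dequeued, then `x`
is dequeued at some earlier time (after being enqueued). -/
theorem queue_fifo_enqueue_dequeue {α : Type*} (q : ℕ → List α)
    (hq : IsQueueTrace q) (h0 : q 0 = [])
    (hdist : ∀ n₁ n₂ x y, EnqueueAt q n₁ x → EnqueueAt q n₂ y → n₁ ≠ n₂ → x ≠ y)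
    (x y : α) (n₁ n₂ m₂ : ℕ) (hx : EnqueueAt q n₁ x) (hy : EnqueueAt q n₂ y)
    (h12 : n₁ < n₂) (hm₂ : n₂ < m₂) (hdeq : DequeueAt q m₂)
    (hheady : (q m₂).head? = some y) :
    ∃ m₁, n₁ < m₁ ∧ m₁ < m₂ ∧ DequeueAt q m₁ ∧ (q m₁).head? = some x := by
  have hy₁ : y ∉ q (n₁ + 1) := hq.notMem_of_forall_not_enqueueAt (by simp [h0])
    fun k hk hky ↦ hdist k n₂ y y hky hy (by lia) rfl
  exact queue_fifo_enqueue_dequeue_general hq (h12.trans hm₂) hx.mem_succ hy₁ hheady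
end
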